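/- Let P be a d-dimensional isotropic simplicial polytope that is a local extremum (with respect to the Hausdorff metric on the space of d-dimensional convex bodies) of K ↦ L_K. Fix a facet F of P with vertices v_1, …, v_d, a vertex v_{j′} of F, and let Z be the affine hull of { v_j : j ≠ j′ }. Introduce cylindrical coordinates (ρ, θ, z) with origin an arbitrary point of Z ∩ P, where ρ ∈ [0,∞) and θ ∈ [−π, π) are polar coordinates in the 2-dimensional plane orthogonal to Z, oriented so that points of F have θ = 0 and all of P has θ ∈ (−π, 0]. Let D be the probability distribution supported on F with density proportional to ρ(x). Then E_{X ∼ D}[‖X‖²] = d + 2. -/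

import Mathlib

open MeasureTheory Finset
open scoped ProbabilityTheory
open scoped RealInnerProductSpace

noncomputable section

abbrev Euc (d : ℕ) := EuclideanSpace ℝ (Fin d)

section GeneralSpace

variable {V : Type*} [NormedAddCommGroup V] [NormedSpace ℝ V]

/-- The dimension of a set: the rank of the direction of its affine span. -/
noncomputable def sdim (F : Set V) : ℕ := Module.finrank ℝ (affineSpan ℝ F).direction

/-- `F` is a simplex with `n` vertices (an `(n-1)`-dimensional simplex). -/
def IsSimplexWith (n : ℕ) (F : Set V) : Prop :=
  ∃ w : Fin n → V, AffineIndependent ℝ w ∧ F = convexHull ℝ (Set.range w)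

/-- A polytope is the convex hull of finitely many points. -/
def IsPolytope (P : Set V) : Prop := ∃ S : Finset V, P = convexHull ℝ (S : Set V)

/-- A facet of a `d`-dimensional polytope: an exposed face of dimension `d - 1`. -/
def IsFacetOf (d : ℕ) (P F : Set V) : Prop := IsExposed ℝ P F ∧ sdim F = d - 1

/-- A `d`-dimensional simplicial polytope: a polytope of dimension `d`, each facet of which
is a `(d-1)`-dimensional simplex (i.e. has `d` affinely independent vertices). -/
def IsSimplicialPolytope (d : ℕ) (P : Set V) : Prop :=
  IsPolytope P ∧ sdim P = d ∧ ∀ F : Set V, IsFacetOf d P F → IsSimplexWith d F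

end GeneralSpace

/-- A convex body: compact, convex, with nonempty interior. -/
def IsConvexBody {d : ℕ} (K : Set (Euc d)) : Prop :=
  IsCompact K ∧ Convex ℝ K ∧ (interior K).Nonempty

/-- The barycenter `μ_K` of the uniform distribution on `K`. -/
noncomputable def centroid {d : ℕ} (K : Set (Euc d)) : Euc d :=
  (volume K).toReal⁻¹ • ∫ x in K, x

/-- The covariance matrix `A(K)` of the uniform distribution on `K`. -/
noncomputable def covMatrix {d : ℕ} (K : Set (Euc d)) : Matrix (Fin d) (Fin d) ℝ :=
  Matrix.of fun i j =>
    (volume K).toReal⁻¹ * ∫ x in K, (x i - centroid K i) * (x j - centroid K j)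

/-- The isotropic constant `L_K`, defined by `L_K ^ (2d) = det A(K) / vol(K) ^ 2`. -/
noncomputable def isoConst {d : ℕ} (K : Set (Euc d)) : ℝ :=
  ((covMatrix K).det / (volume K).toReal ^ 2) ^ ((2 * (d : ℝ))⁻¹)

/-- `K` is isotropic: its barycenter is the origin and its covariance matrix is the identity. -/
def IsIsotropic {d : ℕ} (K : Set (Euc d)) : Prop :=
  centroid K = 0 ∧ covMatrix K = 1

/-- `P` is a local extremum (local maximum or local minimum) of `K ↦ L_K` among convex bodies,
with respect to the Hausdorff metric. -/
def IsLocalExtremumOfIsoConst {d : ℕ} (P : Set (Euc d)) : Prop :=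
  (∃ ε > 0, ∀ K : Set (Euc d), IsConvexBody K →
      Metric.hausdorffDist K P < ε → isoConst K ≤ isoConst P) ∨
  (∃ ε > 0, ∀ K : Set (Euc d), IsConvexBody K →
      Metric.hausdorffDist K P < ε → isoConst P ≤ isoConst K)

/-- The polar angle of `(a, b) ∈ ℝ²`, normalized to lie in `[-π, π)`. -/
noncomputable def polarAngle (a b : ℝ) : ℝ :=
  if Complex.arg ⟨a, b⟩ = Real.pi then -Real.pi else Complex.arg ⟨a, b⟩

/-!
Let `σ` be an affine function that is nonpositive on `P` and vanishes on `P` exactly on `F`. Adding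
to the vertices of `P` a point slightly beyond a relative interior point of `F` gives a convex body
`Q` with `Q ∩ {σ ≤ 0} = P`, so `K t = Q ∩ {σ ≤ t * g}` is, for every affine `g` and small `t` of
either sign, a convex body close to `P = K 0`. The derivative at `t = 0` of `∫ x in K t, f x` is
proportional to `∫ x in F, f x * g x`. Since `P` is isotropic, the derivative of
`det A(K t) / vol(K t) ^ 2` is therefore proportional to `∫ x in F, (‖x‖ ^ 2 - (d + 2)) * g x`,
which vanishes because `P` is a local extremum. The distance `ρ` agrees on `F` with the affine
function `⟪x - o, u⟫`, which can be taken for `g`.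
-/

open scoped Topology

section Subgraph

theorem hasDerivAt_setIntegral_Iic_mul {h : ℝ → ℝ} (hh : Integrable h) (hc : ContinuousAt h 0)
    (a : ℝ) : HasDerivAt (fun t => ∫ s in Set.Iic (t * a), h s) (h 0 * a) 0 := by
  have hFTC : HasDerivAt (fun b => ∫ s in (0 : ℝ)..b, h s) (h 0) (0 * a) := by
    rw [zero_mul]
    exact intervalIntegral.integral_hasDerivAt_right hh.intervalIntegrable
      hh.aestronglyMeasurable.stronglyMeasurableAtFilter hc
  have hsplit : (fun t => ∫ s in Set.Iic (t * a), h s) =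
      fun t => (∫ s in Set.Iic 0, h s) + ∫ s in (0 : ℝ)..t * a, h s := by
    funext t
    rw [← intervalIntegral.integral_Iic_sub_Iic hh.integrableOn hh.integrableOn]
    ring
  rw [hsplit]
  exact (hFTC.comp 0 (hasDerivAt_mul_const a)).const_add _

theorem abs_setIntegral_Iic_mul_sub_le {h : ℝ → ℝ} (hh : Integrable h) {M : ℝ}
    (hM : ∀ s, ‖h s‖ ≤ M) (a t t' : ℝ) :
    |(∫ s in Set.Iic (t * a), h s) - ∫ s in Set.Iic (t' * a), h s| ≤ M * |a| * |t - t'| := by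
  rw [intervalIntegral.integral_Iic_sub_Iic hh.integrableOn hh.integrableOn]
  refine (intervalIntegral.norm_integral_le_of_norm_le_const fun s _ => hM s).trans_eq ?_
  rw [← sub_mul, abs_mul]
  ring

variable {α : Type*} [MeasurableSpace α] {ν : Measure α} {φ : α × ℝ → ℝ} {g : α → ℝ}

theorem integrable_setIntegral_Iic_mul (hg : Measurable g) (hφ : Integrable φ (ν.prod volume))
    (t : ℝ) : Integrable (fun y => ∫ s in Set.Iic (t * g y), φ (y, s)) ν := by
  have hmeas : MeasurableSet {p : α × ℝ | p.2 ≤ t * g p.1} :=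
    measurableSet_le measurable_snd (by fun_prop)
  exact (hφ.indicator hmeas).integral_prod_left.congr
    (.of_forall fun y => integral_indicator (s := Set.Iic (t * g y)) measurableSet_Iic)

variable [SFinite ν]

theorem setIntegral_subgraph_eq (hg : Measurable g) (hφ : Integrable φ (ν.prod volume)) (t : ℝ) :
    ∫ p in {p | p.2 ≤ t * g p.1}, φ p ∂(ν.prod volume) =
      ∫ y, (∫ s in Set.Iic (t * g y), φ (y, s)) ∂ν := by
  have hmeas : MeasurableSet {p : α × ℝ | p.2 ≤ t * g p.1} :=
    measurableSet_le measurable_snd (by fun_prop)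
  rw [← integral_indicator hmeas, integral_prod _ (hφ.indicator hmeas)]
  exact integral_congr_ae
    (.of_forall fun y => integral_indicator (s := Set.Iic (t * g y)) measurableSet_Iic)

theorem hasDerivAt_setIntegral_subgraph {b : α → ℝ} (hg : Measurable g)
    (hφ : Integrable φ (ν.prod volume)) (hφb : ∀ p, ‖φ p‖ ≤ b p.1)
    (hbg : Integrable (fun y => b y * g y) ν)
    (hcont : ∀ᵐ y ∂ν, ContinuousAt (fun s => φ (y, s)) 0)
    (hφ₀ : AEStronglyMeasurable (fun y => φ (y, 0)) ν) :
    HasDerivAt (fun t => ∫ p in {p | p.2 ≤ t * g p.1}, φ p ∂(ν.prod volume))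
      (∫ y, φ (y, 0) * g y ∂ν) 0 := by
  have hb (y : α) : 0 ≤ b y := (norm_nonneg _).trans (hφb (y, 0))
  have hint (t : ℝ) := integrable_setIntegral_Iic_mul hg hφ t
  simp only [setIntegral_subgraph_eq hg hφ]
  refine (hasDerivAt_integral_of_dominated_loc_of_lip (bound := fun y => ‖b y * g y‖)
    Filter.univ_mem (.of_forall fun t => (hint t).aestronglyMeasurable) (hint 0)
    (hφ₀.mul hg.aestronglyMeasurable) ?_ hbg.norm ?_).2
  · filter_upwards [hφ.prod_right_ae] with y hy
    refine LipschitzOnWith.of_dist_le_mul fun t _ t' _ => ?_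
    rw [Real.coe_nnabs, abs_norm, norm_mul, Real.norm_of_nonneg (hb y)]
    exact abs_setIntegral_Iic_mul_sub_le hy (fun s => hφb (y, s)) (g y) t t'
  · filter_upwards [hφ.prod_right_ae, hcont] with y hy hcy
    exact hasDerivAt_setIntegral_Iic_mul hy hcy (g y)

end Subgraph

section ConvexSlice

variable {H E : Type*} [NormedAddCommGroup H] [NormedSpace ℝ H] [NormedAddCommGroup E]
  [NormedSpace ℝ E]

theorem interior_preimage_eq_preimage_interior_of_convex {Q : Set E} (hQ : Convex ℝ Q)
    (ι : H →ᴬ[ℝ] E) {p : H} (hp : ι p ∈ interior Q) : interior (ι ⁻¹' Q) = ι ⁻¹' interior Q := by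
  refine Set.Subset.antisymm (fun y hy => ?_)
    (preimage_interior_subset_interior_preimage ι.continuous)
  -- prolong the segment from `p` to `y` a little beyond `y`
  have hlim : Filter.Tendsto (fun r : ℝ => AffineMap.lineMap p y r) (𝓝[>] 1) (𝓝 y) := by
    have h := (AffineMap.lineMap_continuous (p := p) (q := y)).tendsto (1 : ℝ)
    rw [AffineMap.lineMap_apply_one] at h
    exact h.mono_left nhdsWithin_le_nhds
  obtain ⟨r, hrQ, hr : 1 < r⟩ :=
    ((hlim.eventually (mem_interior_iff_mem_nhds.1 hy)).and self_mem_nhdsWithin).exists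
  refine hQ.openSegment_interior_self_subset_interior hp hrQ ?_
  rw [openSegment_eq_image_lineMap]
  refine ⟨r⁻¹, ⟨by positivity, inv_lt_one_of_one_lt₀ hr⟩, ?_⟩
  rw [← ι.coe_toAffineMap, ← AffineMap.apply_lineMap, AffineMap.lineMap_lineMap_right,
    inv_mul_cancel₀ (by positivity), AffineMap.lineMap_apply_one]

theorem ae_notMem_frontier_of_convex [FiniteDimensional ℝ H] [MeasurableSpace H] [BorelSpace H]
    (ν : Measure H) [ν.IsAddHaarMeasure] {Q : Set E} (hQ : Convex ℝ Q) (hclosed : IsClosed Q)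
    (ι : H →ᴬ[ℝ] E) {p : H} (hp : ι p ∈ interior Q) : ∀ᵐ y ∂ν, ι y ∉ frontier Q := by
  have hfrontier : frontier (ι ⁻¹' Q) = ι ⁻¹' frontier Q := by
    rw [(hclosed.preimage ι.continuous).frontier_eq, hclosed.frontier_eq, Set.preimage_sdiff,
      interior_preimage_eq_preimage_interior_of_convex hQ ι hp]
  have hnull := (hQ.affine_preimage (ι : H →ᵃ[ℝ] E)).addHaar_frontier ν
  rw [ContinuousAffineMap.coe_toAffineMap, hfrontier] at hnull
  exact measure_eq_zero_iff_ae_notMem.1 hnull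

variable [FiniteDimensional ℝ H] [MeasurableSpace H] [BorelSpace H]
  (ν : Measure H) [ν.IsAddHaarMeasure]

theorem hasDerivAt_setIntegral_convex_prod_real {Q : Set (H × ℝ)} (hQ : IsCompact Q)
    (hconv : Convex ℝ Q) {p : H} (hp : (p, 0) ∈ interior Q) {f : H × ℝ → ℝ} (hf : Continuous f)
    {g : H → ℝ} (hg : Continuous g) :
    HasDerivAt (fun t => ∫ x in {x ∈ Q | x.2 ≤ t * g x.1}, f x ∂(ν.prod volume))
      (∫ y in {y | (y, 0) ∈ Q}, f (y, 0) * g y ∂ν) 0 := by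
  obtain ⟨M, hM⟩ := hQ.exists_bound_of_continuousOn hf.continuousOn
  have hB : IsCompact (Prod.fst '' Q) := hQ.image continuous_fst
  have hslice : MeasurableSet {y : H | (y, (0 : ℝ)) ∈ Q} :=
    (hQ.isClosed.preimage (by fun_prop : Continuous fun y : H => (y, (0 : ℝ)))).measurableSet
  let ι : H →ᴬ[ℝ] H × ℝ := (ContinuousLinearMap.inl ℝ H ℝ).toContinuousAffineMap
  have key := hasDerivAt_setIntegral_subgraph (ν := ν) (φ := Q.indicator f) (g := g)
    (b := (Prod.fst '' Q).indicator fun _ => M) hg.measurable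
    ((hf.continuousOn.integrableOn_compact hQ).integrable_indicator hQ.measurableSet)
    (fun x => ?_) ?_ ?_ ?_
  · convert key using 1
    · funext t
      rw [setIntegral_indicator hQ.measurableSet, Set.inter_comm]
      rfl
    · rw [← integral_indicator hslice]
      refine integral_congr_ae (.of_forall fun y => ?_)
      by_cases hy : (y, (0 : ℝ)) ∈ Q <;> simp [Set.indicator, hy]
  · by_cases hx : x ∈ Q
    · simpa [hx, Set.mem_image_of_mem Prod.fst hx] using hM x hx
    · simp only [Set.indicator_of_notMem hx, norm_zero]
      refine Set.indicator_nonneg ?_ x.1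
      rintro _ ⟨x', hx', -⟩
      exact (norm_nonneg _).trans (hM x' hx')
  · simp only [← Set.indicator_mul_left]
    exact ((hg.const_mul M).continuousOn.integrableOn_compact hB).integrable_indicator
      hB.measurableSet
  · filter_upwards [ae_notMem_frontier_of_convex ν hconv hQ.isClosed ι hp] with y hy
    have hy' : ContinuousAt (Q.indicator f) (y, 0) := hf.continuousOn.continuousAt_indicator hy
    exact hy'.comp (f := fun s : ℝ => (y, s)) (by fun_prop)
  · exact ((hf.measurable.indicator hQ.measurableSet).comp (by fun_prop)).aestronglyMeasurable

end ConvexSlice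

section LevelCoord

variable {E : Type*} [NormedAddCommGroup E] [NormedSpace ℝ E]

theorem affine_apply_add (g : E →ᴬ[ℝ] ℝ) (x v : E) : g (x + v) = g x + g.contLinear v := by
  rw [add_comm x, ← vadd_eq_add, g.map_vadd, vadd_eq_add, add_comm]

theorem affine_apply_lineMap (g : E →ᴬ[ℝ] ℝ) (x y : E) (r : ℝ) :
    g (AffineMap.lineMap x y r) = (1 - r) * g x + r * g y := by
  rw [← g.coe_toAffineMap, AffineMap.apply_lineMap, AffineMap.lineMap_apply_ring]

/-- Affine coordinates adapted to an affine function `σ` and a vector `w` transversal to its level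
sets: the point with coordinates `(y, s)`, `y` in the direction of the level sets, is
`o + y + s • w`. -/
def levelCoord (σ : E →ᴬ[ℝ] ℝ) {w : E} (hw : σ.contLinear w = 1) (o : E) :
    (σ.contLinear.ker × ℝ) ≃ᴬ[ℝ] E :=
  (((ContinuousLinearEquiv.prodComm ℝ _ ℝ).trans
    (ContinuousLinearEquiv.equivOfRightInverse σ.contLinear (.toSpanSingleton ℝ w)
      fun s => by simp [hw]).symm).toContinuousAffineEquiv).trans (.constVAdd ℝ E o)

variable {σ : E →ᴬ[ℝ] ℝ} {w : E} (hw : σ.contLinear w = 1) (o : E)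

theorem levelCoord_apply (p : σ.contLinear.ker × ℝ) :
    levelCoord σ hw o p = o + (p.2 • w + (p.1 : E)) := rfl

theorem levelCoord_apply_zero (y : σ.contLinear.ker) :
    levelCoord σ hw o (y, 0) = o + (y : E) := by
  rw [levelCoord_apply, zero_smul, zero_add]

theorem apply_levelCoord (g : E →ᴬ[ℝ] ℝ) (p : σ.contLinear.ker × ℝ) :
    g (levelCoord σ hw o p) = g (o + p.1) + p.2 * g.contLinear w := by
  rw [levelCoord_apply, add_comm (p.2 • w), ← add_assoc, affine_apply_add, map_smul, smul_eq_mul]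

theorem apply_levelCoord_self (p : σ.contLinear.ker × ℝ) :
    σ (levelCoord σ hw o p) = σ o + p.2 := by
  have hker : σ.contLinear p.1 = 0 := p.1.2
  rw [apply_levelCoord, hw, mul_one, affine_apply_add, hker, add_zero]

variable [FiniteDimensional ℝ E] [MeasurableSpace E] [BorelSpace E]

theorem exists_eq_smul_map_levelCoord (μ : Measure E) [μ.IsAddHaarMeasure]
    (ν : Measure σ.contLinear.ker) [ν.IsAddHaarMeasure] :
    ∃ c : NNReal, 0 < c ∧ μ = c • (ν.prod volume).map (levelCoord σ hw o) := by
  have hlin : ((ν.prod volume).map (levelCoord σ hw 0)).IsAddHaarMeasure := by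
    have h : ⇑(levelCoord σ hw 0) = (ContinuousLinearEquiv.prodComm ℝ _ ℝ).trans
        (ContinuousLinearEquiv.equivOfRightInverse σ.contLinear (.toSpanSingleton ℝ w)
          fun s => by simp [hw]).symm := funext fun p => zero_add _
    rw [h]
    exact ContinuousLinearEquiv.isAddHaarMeasure_map _ _
  have htranslate : (ν.prod volume).map (levelCoord σ hw o) =
      (ν.prod volume).map (levelCoord σ hw 0) := by
    rw [← map_add_left_eq_self ((ν.prod volume).map (levelCoord σ hw 0)) o,
      Measure.map_map (by fun_prop) (levelCoord σ hw 0).continuous.measurable]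
    congr 1
    exact funext fun p => congrArg (o + ·) (zero_add _).symm
  rw [htranslate]
  exact ⟨_, Measure.addHaarScalarFactor_pos_of_isAddHaarMeasure _ _,
    Measure.isAddLeftInvariant_eq_smul _ _⟩

theorem setIntegral_hausdorffMeasure_eq_submodule (V : Submodule ℝ E) {o : E} {F : Set E}
    (hF : ∀ x ∈ F, x - o ∈ V) {k : ℝ} (hk : 0 ≤ k) (h : E → ℝ) :
    ∫ x in F, h x ∂μH[k] = ∫ y in {y : V | o + (y : E) ∈ F}, h (o + y) ∂μH[k] := by
  have hι : Isometry fun y : V => o + (y : E) :=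
    (isometry_add_left o).comp isometry_subtype_coe
  have hrange : F ⊆ Set.range fun y : V => o + (y : E) :=
    fun x hx => ⟨⟨x - o, hF x hx⟩, add_sub_cancel o x⟩
  have hmap := hι.isClosedEmbedding.measurableEmbedding.setIntegral_map (μ := μH[k]) h F
  rwa [hι.map_hausdorffMeasure (.inl hk), Measure.restrict_restrict_of_subset hrange] at hmap

theorem setIntegral_levelSet_hausdorffMeasure {o : E} (hσ : σ.contLinear ≠ 0) (ho : σ o = 0)
    (Q : Set E) (h : E → ℝ) :
    ∫ x in {x ∈ Q | σ x = 0}, h x ∂μH[Module.finrank ℝ E - 1] =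
      ∫ y in {y : σ.contLinear.ker | o + (y : E) ∈ Q}, h (o + y)
        ∂μH[Module.finrank ℝ σ.contLinear.ker] := by
  have hrank : (Module.finrank ℝ E : ℝ) - 1 = Module.finrank ℝ σ.contLinear.ker := by
    rw [sub_eq_iff_eq_add]
    exact_mod_cast (Module.Dual.finrank_ker_add_one_of_ne_zero (f := σ.contLinear.toLinearMap)
      (by exact_mod_cast hσ)).symm
  have hσo (y : E) : σ (o + y) = σ.contLinear y := by rw [affine_apply_add, ho, zero_add]
  rw [hrank, setIntegral_hausdorffMeasure_eq_submodule σ.contLinear.ker (o := o) ?_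
    (Nat.cast_nonneg _)]
  · congr with y
    simp [hσo]
  · exact fun x hx => (hσo (x - o)).symm.trans (by simpa using hx.2)

end LevelCoord

section TiltedCut

variable {E : Type*} [NormedAddCommGroup E] [NormedSpace ℝ E]

/-- The part of `Q` below the graph of `t * g` over the hyperplane `σ = 0`, the height being
measured by `σ`: for small `t` it arises from `Q ∩ {σ ≤ 0}` by tilting the bounding hyperplane. -/
def tiltedCut (σ g : E →ᴬ[ℝ] ℝ) (Q : Set E) (t : ℝ) : Set E := {x ∈ Q | σ x ≤ t * g x}

theorem isCompact_tiltedCut (σ g : E →ᴬ[ℝ] ℝ) {Q : Set E} (hQ : IsCompact Q) (t : ℝ) :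
    IsCompact (tiltedCut σ g Q t) :=
  hQ.inter_right (isClosed_le σ.continuous (g.continuous.const_mul t))

theorem convex_tiltedCut (σ g : E →ᴬ[ℝ] ℝ) {Q : Set E} (hQ : Convex ℝ Q) (t : ℝ) :
    Convex ℝ (tiltedCut σ g Q t) := by
  have h := (convex_Iic (0 : ℝ)).affine_preimage (σ - t • g : E →ᴬ[ℝ] ℝ).toAffineMap
  convert hQ.inter h using 2
  ext x
  simp [tiltedCut]

theorem tiltedCut_zero (σ g : E →ᴬ[ℝ] ℝ) (Q : Set E) :
    tiltedCut σ g Q 0 = {x ∈ Q | σ x ≤ 0} := by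
  simp only [tiltedCut, zero_mul]

theorem eventually_nonempty_interior_tiltedCut {σ : E →ᴬ[ℝ] ℝ} (g : E →ᴬ[ℝ] ℝ) {Q : Set E} {q : E}
    (hq : q ∈ interior Q) (hσq : σ q < 0) :
    ∀ᶠ t in 𝓝 (0 : ℝ), (interior (tiltedCut σ g Q t)).Nonempty := by
  have hlim : Filter.Tendsto (fun t : ℝ => t * g q) (𝓝 0) (𝓝 0) :=
    (continuous_mul_const (g q)).tendsto' 0 0 (zero_mul _)
  filter_upwards [hlim.eventually (lt_mem_nhds hσq)] with t ht
  refine ⟨q, mem_interior_iff_mem_nhds.2 ?_⟩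
  filter_upwards [mem_interior_iff_mem_nhds.1 hq,
    (isOpen_lt σ.continuous (g.continuous.const_mul t)).mem_nhds ht] with x hxQ hx
  exact ⟨hxQ, le_of_lt hx⟩

theorem exists_mem_affine_le_neg_of_le {σ : E →ᴬ[ℝ] ℝ} {Q : Set E} (hconv : Convex ℝ Q) {q : E}
    (hq : q ∈ Q) (hσq : σ q < 0) {ε : ℝ} (hε : 0 ≤ ε) (hεq : 2 * ε ≤ -σ q) {x : E} (hx : x ∈ Q)
    (hσx : σ x ≤ ε) : ∃ y ∈ Q, σ y ≤ -ε ∧ dist x y = 2 * ε / -σ q * dist x q := by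
  have ha : 0 < -σ q := neg_pos.2 hσq
  have hr₀ : 0 ≤ 2 * ε / -σ q := by positivity
  have hr₁ : 2 * ε / -σ q ≤ 1 := (div_le_one ha).2 hεq
  have hrσ : 2 * ε / -σ q * σ q = -(2 * ε) := by
    rw [div_neg, neg_mul, div_mul_cancel₀ _ hσq.ne]
  refine ⟨AffineMap.lineMap x q (2 * ε / -σ q), hconv.lineMap_mem hx hq ⟨hr₀, hr₁⟩, ?_, ?_⟩
  · rw [affine_apply_lineMap, hrσ]
    nlinarith [mul_le_mul_of_nonneg_left hσx (sub_nonneg.2 hr₁), mul_nonneg hr₀ hε]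
  · rw [dist_left_lineMap, Real.norm_of_nonneg hr₀]

theorem hausdorffDist_tiltedCut_le {σ g : E →ᴬ[ℝ] ℝ} {Q : Set E} (hQ : IsCompact Q)
    (hconv : Convex ℝ Q) {q : E} (hq : q ∈ Q) (hσq : σ q < 0) {t ε : ℝ}
    (hε : ∀ x ∈ Q, |t * g x| ≤ ε) (hεq : 2 * ε ≤ -σ q) :
    Metric.hausdorffDist (tiltedCut σ g Q t) (tiltedCut σ g Q 0) ≤
      2 * ε / -σ q * Metric.diam Q := by
  have hε₀ : 0 ≤ ε := (abs_nonneg _).trans (hε q hq)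
  have hr : 0 ≤ 2 * ε / -σ q := div_nonneg (by positivity) (neg_pos.2 hσq).le
  have hpush {x : E} (hx : x ∈ Q) (hσx : σ x ≤ ε) :
      ∃ y ∈ Q, σ y ≤ -ε ∧ dist x y ≤ 2 * ε / -σ q * Metric.diam Q := by
    obtain ⟨y, hy, hσy, hdist⟩ := exists_mem_affine_le_neg_of_le hconv hq hσq hε₀ hεq hx hσx
    exact ⟨y, hy, hσy, hdist.trans_le
      (mul_le_mul_of_nonneg_left (Metric.dist_le_diam_of_mem hQ.isBounded hx hq) hr)⟩
  refine Metric.hausdorffDist_le_of_mem_dist (mul_nonneg hr Metric.diam_nonneg) ?_ ?_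
  · rintro x ⟨hx, hxt⟩
    obtain ⟨y, hy, hσy, hdist⟩ := hpush hx (hxt.trans (le_of_abs_le (hε x hx)))
    exact ⟨y, ⟨hy, by linarith⟩, hdist⟩
  · rintro x ⟨hx, hx₀⟩
    obtain ⟨y, hy, hσy, hdist⟩ := hpush hx (by linarith)
    exact ⟨y, ⟨hy, hσy.trans (neg_le_of_abs_le (hε y hy))⟩, hdist⟩

theorem tendsto_hausdorffDist_tiltedCut {σ : E →ᴬ[ℝ] ℝ} (g : E →ᴬ[ℝ] ℝ) {Q : Set E}
    (hQ : IsCompact Q) (hconv : Convex ℝ Q) {q : E} (hq : q ∈ Q) (hσq : σ q < 0) :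
    Filter.Tendsto (fun t => Metric.hausdorffDist (tiltedCut σ g Q t) (tiltedCut σ g Q 0))
      (𝓝 0) (𝓝 0) := by
  obtain ⟨B, hB⟩ := hQ.exists_bound_of_continuousOn g.continuous.continuousOn
  have hbound (t : ℝ) : ∀ x ∈ Q, |t * g x| ≤ |t| * B := fun x hx => by
    rw [abs_mul]
    exact mul_le_mul_of_nonneg_left (hB x hx) (abs_nonneg t)
  have hsmall : ∀ᶠ t : ℝ in 𝓝 0, 2 * (|t| * B) < -σ q :=
    (Continuous.tendsto' (by fun_prop : Continuous fun t : ℝ => 2 * (|t| * B)) 0 0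
      (by simp)).eventually (gt_mem_nhds (neg_pos.2 hσq))
  have hlim : Filter.Tendsto (fun t : ℝ => 2 * (|t| * B) / -σ q * Metric.diam Q) (𝓝 0) (𝓝 0) :=
    Continuous.tendsto' (by fun_prop) 0 0 (by simp)
  refine squeeze_zero' (.of_forall fun _ => Metric.hausdorffDist_nonneg) ?_ hlim
  filter_upwards [hsmall] with t ht
  exact hausdorffDist_tiltedCut_le hQ hconv hq hσq (hbound t) ht.le

variable {σ : E →ᴬ[ℝ] ℝ} {w : E} [FiniteDimensional ℝ E] [MeasurableSpace E] [BorelSpace E]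

theorem exists_hasDerivAt_setIntegral_tiltedCut (hw : σ.contLinear w = 1) {g : E →ᴬ[ℝ] ℝ}
    (hg : g.contLinear w = 0) (μ : Measure E) [μ.IsAddHaarMeasure] {Q : Set E} (hQ : IsCompact Q)
    (hconv : Convex ℝ Q) {p : E} (hp : p ∈ interior Q) (hσp : σ p = 0) :
    ∃ c : ℝ, 0 < c ∧ ∀ f : E → ℝ, Continuous f →
      HasDerivAt (fun t => ∫ x in tiltedCut σ g Q t, f x ∂μ)
        (c * ∫ x in {x ∈ Q | σ x = 0}, f x * g x ∂μH[Module.finrank ℝ E - 1]) 0 := by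
  have hσ : σ.contLinear ≠ 0 := fun h => by simp [h] at hw
  let e := levelCoord σ hw p
  let ν : Measure σ.contLinear.ker := μH[Module.finrank ℝ σ.contLinear.ker]
  have hcut (t : ℝ) : e ⁻¹' tiltedCut σ g Q t =
      {x ∈ e ⁻¹' Q | x.2 ≤ t * g (p + x.1)} := by
    ext x
    simp only [tiltedCut, Set.mem_preimage, Set.mem_ofPred_eq, e, apply_levelCoord_self, hσp,
      zero_add, apply_levelCoord hw p g, hg, mul_zero, add_zero]
  obtain ⟨c, hc, hμ⟩ := exists_eq_smul_map_levelCoord hw p μ ν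
  have hint (f : E → ℝ) (t : ℝ) : ∫ x in tiltedCut σ g Q t, f x ∂μ =
      c * ∫ x in {x ∈ e ⁻¹' Q | x.2 ≤ t * g (p + x.1)}, f (e x) ∂(ν.prod volume) := by
    have hemb : MeasurableEmbedding e := e.toHomeomorph.measurableEmbedding
    rw [hμ, Measure.restrict_smul, integral_smul_nnreal_measure, hemb.setIntegral_map, hcut]
    rfl
  have hcompact : IsCompact (e ⁻¹' Q) := e.toHomeomorph.isCompact_preimage.2 hQ
  have hconvex : Convex ℝ (e ⁻¹' Q) := hconv.affine_preimage e.toAffineEquiv.toAffineMap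
  have hinterior : ((0 : σ.contLinear.ker), (0 : ℝ)) ∈ interior (e ⁻¹' Q) := by
    refine preimage_interior_subset_interior_preimage e.continuous ?_
    rwa [Set.mem_preimage, levelCoord_apply_zero, Submodule.coe_zero, add_zero]
  refine ⟨c, hc, fun f hf => ?_⟩
  have hderiv := hasDerivAt_setIntegral_convex_prod_real ν hcompact hconvex hinterior
    (f := fun x => f (e x)) (hf.comp e.continuous) (g := fun y => g (p + y)) (by fun_prop)
  simp only [Set.mem_preimage, e, levelCoord_apply_zero] at hderiv
  simp only [hint, setIntegral_levelSet_hausdorffMeasure hσ hσp]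
  exact hderiv.const_mul (c : ℝ)

end TiltedCut

section Extension

theorem exists_sub_eq_smul_sub_of_mem_convexHull {E : Type*} [AddCommGroup E] [Module ℝ E]
    {C S : Set E} (hC : Convex ℝ C) {z : E}
    (hS : ∀ s ∈ S, ∃ c : ℝ, 0 < c ∧ ∃ f ∈ C, s - z = c • (f - z)) {x : E}
    (hx : x ∈ convexHull ℝ S) : ∃ c : ℝ, 0 < c ∧ ∃ f ∈ C, x - z = c • (f - z) := by
  let K := ConvexCone.hull ℝ ((fun y => -z + y) '' C)
  have hK (y : E) : -z + y ∈ K ↔ ∃ c : ℝ, 0 < c ∧ ∃ f ∈ C, y - z = c • (f - z) := by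
    rw [ConvexCone.mem_hull_of_convex (hC.translate (-z))]
    simp only [Set.mem_smul_set, Set.exists_mem_image, neg_add_eq_sub, eq_comm (a := y - z)]
  exact (hK x).1 (convexHull_min (fun s hs => (hK s).2 (hS s hs))
    (K.convex.translate_preimage_right (-z)) hx)

variable {E : Type*} [NormedAddCommGroup E] [NormedSpace ℝ E] {σ : E →ᴬ[ℝ] ℝ} {S : Set E}

theorem apply_lineMap_div_sub_eq_zero {x y : E} (h : σ x ≠ σ y) :
    σ (AffineMap.lineMap x y (σ x / (σ x - σ y))) = 0 := by
  have h' : σ x - σ y ≠ 0 := sub_ne_zero.2 h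
  rw [affine_apply_lineMap]
  field_simp
  ring

theorem sep_convexHull_insert_eq {z : E} (hz : 0 < σ z) (hσ : ∀ x ∈ convexHull ℝ S, σ x ≤ 0)
    (hS : ∀ s ∈ S, ∃ c : ℝ, 0 < c ∧ ∃ f ∈ {x ∈ convexHull ℝ S | σ x = 0}, s - z = c • (f - z)) :
    {x ∈ convexHull ℝ (insert z S) | σ x ≤ 0} = convexHull ℝ S := by
  have hconv := convex_convexHull ℝ S
  have hface : Convex ℝ {x ∈ convexHull ℝ S | σ x = 0} :=
    hconv.inter ((convex_singleton (0 : ℝ)).affine_preimage σ.toAffineMap)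
  refine Set.Subset.antisymm ?_ fun x hx =>
    ⟨convexHull_mono (Set.subset_insert z S) hx, hσ x hx⟩
  rintro x ⟨hx, hσx⟩
  obtain rfl | hne := S.eq_empty_or_nonempty
  · simp only [insert_empty_eq, convexHull_singleton, Set.mem_singleton_iff] at hx
    exact absurd (hx ▸ hσx) hz.not_ge
  rw [convexHull_insert hne, convexJoin_singleton_left, Set.mem_iUnion₂] at hx
  obtain ⟨y, hy, hxy⟩ := hx
  obtain ⟨c, hc, f, ⟨hf, hσf⟩, hcf⟩ := exists_sub_eq_smul_sub_of_mem_convexHull hface hS hy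
  rw [segment_eq_image_lineMap] at hxy
  obtain ⟨r, ⟨-, hr₁⟩, rfl⟩ := hxy
  -- on the ray from `z` through `f`, the point `f` precedes `x`, which precedes `y`
  have hyf : y = AffineMap.lineMap z f c := by
    rw [AffineMap.lineMap_apply_module', ← hcf, sub_add_cancel]
  rw [hyf, AffineMap.lineMap_lineMap_right] at hσx ⊢
  have hrc : 1 ≤ r * c := by
    rw [affine_apply_lineMap, hσf] at hσx
    nlinarith
  have hray := (hconv.affine_preimage (AffineMap.lineMap (k := ℝ) z f)).ordConnected
  refine hray.out (x := 1) (y := c) ?_ ?_ ⟨hrc, mul_le_of_le_one_left hc.le hr₁⟩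
  · rwa [Set.mem_preimage, AffineMap.lineMap_apply_one]
  · rwa [Set.mem_preimage, ← hyf]

theorem eventually_sep_convexHull_insert_eq (hS : S.Finite)
    (hσ : ∀ x ∈ convexHull ℝ S, σ x ≤ 0) {m : E} (hσm : σ m = 0)
    (hm : ∀ᶠ x in 𝓝[{x | σ x = 0}] m, x ∈ convexHull ℝ S) :
    ∀ᶠ z in 𝓝[{z | 0 < σ z}] m,
      {x ∈ convexHull ℝ (insert z S) | σ x ≤ 0} = convexHull ℝ S := by
  have hcross : ∀ s ∈ S, σ s < 0 → ∀ᶠ z in 𝓝[{z | 0 < σ z}] m,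
      AffineMap.lineMap z s (σ z / (σ z - σ s)) ∈ convexHull ℝ S := fun s _ hσs => by
    have hne : σ m - σ s ≠ 0 := by rw [hσm, zero_sub]; exact neg_ne_zero.2 hσs.ne
    have hcont : ContinuousAt (fun z => AffineMap.lineMap z s (σ z / (σ z - σ s))) m := by
      simp only [AffineMap.lineMap_apply_module]
      fun_prop (disch := exact hne)
    have hlim := hcont.tendsto
    rw [hσm, zero_div, AffineMap.lineMap_apply_zero] at hlim
    refine Filter.Tendsto.eventually (tendsto_nhdsWithin_iff.2
      ⟨hlim.mono_left nhdsWithin_le_nhds, ?_⟩) hm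
    filter_upwards [self_mem_nhdsWithin] with z hz
    exact apply_lineMap_div_sub_eq_zero (hσs.trans hz).ne'
  have hcross' : ∀ᶠ z in 𝓝[{z | 0 < σ z}] m, ∀ s ∈ S, σ s < 0 →
      AffineMap.lineMap z s (σ z / (σ z - σ s)) ∈ convexHull ℝ S := by
    rw [Filter.eventually_all_finite hS]
    exact fun s hs => Filter.eventually_imp_distrib_left.2 (hcross s hs)
  filter_upwards [hcross', self_mem_nhdsWithin] with z hz hσz
  refine sep_convexHull_insert_eq hσz hσ fun s hs => ?_
  have hsS := subset_convexHull ℝ S hs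
  obtain hσs | hσs := (hσ s hsS).eq_or_lt
  · exact ⟨1, one_pos, s, ⟨hsS, hσs⟩, (one_smul ℝ _).symm⟩
  · have hr : 0 < σ z / (σ z - σ s) := div_pos hσz (sub_pos.2 (hσs.trans hσz))
    refine ⟨_, inv_pos.2 hr, _,
      ⟨hz s hs hσs, apply_lineMap_div_sub_eq_zero (hσs.trans hσz).ne'⟩, ?_⟩
    rw [AffineMap.lineMap_apply_module', add_sub_cancel_right, inv_smul_smul₀ hr.ne']

theorem exists_extension_of_eventually_mem (hS : S.Finite)
    (hσ : ∀ x ∈ convexHull ℝ S, σ x ≤ 0) {m : E} (hσm : σ m = 0)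
    (hm : ∀ᶠ x in 𝓝[{x | σ x = 0}] m, x ∈ convexHull ℝ S) {q : E}
    (hq : q ∈ interior (convexHull ℝ S)) (hσq : σ q < 0) :
    ∃ Q : Set E, IsCompact Q ∧ Convex ℝ Q ∧ {x ∈ Q | σ x ≤ 0} = convexHull ℝ S ∧
      ∃ p ∈ interior Q, σ p = 0 := by
  have habove : (𝓝[{z | 0 < σ z}] m).NeBot := by
    have hlim : Filter.Tendsto (fun r : ℝ => AffineMap.lineMap m q r) (𝓝[<] 0) (𝓝 m) := by
      have h := (AffineMap.lineMap_continuous (p := m) (q := q)).tendsto (0 : ℝ)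
      rw [AffineMap.lineMap_apply_zero] at h
      exact h.mono_left nhdsWithin_le_nhds
    refine (tendsto_nhdsWithin_iff.2 ⟨hlim, ?_⟩).neBot
    filter_upwards [self_mem_nhdsWithin] with r (hr : r < 0)
    rw [affine_apply_lineMap, hσm]
    nlinarith
  obtain ⟨z, hQ, hσz : 0 < σ z⟩ :=
    ((eventually_sep_convexHull_insert_eq hS hσ hσm hm).and self_mem_nhdsWithin).exists
  have hqQ : q ∈ interior (convexHull ℝ (insert z S)) :=
    interior_mono (convexHull_mono (Set.subset_insert z S)) hq
  have hzQ : z ∈ convexHull ℝ (insert z S) := subset_convexHull ℝ _ (Set.mem_insert z S)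
  refine ⟨_, (hS.insert z).isCompact_convexHull ℝ, convex_convexHull ℝ _, hQ,
    AffineMap.lineMap q z (σ q / (σ q - σ z)), ?_, apply_lineMap_div_sub_eq_zero (hσq.trans hσz).ne⟩
  refine (convex_convexHull ℝ _).openSegment_interior_self_subset_interior hqQ hzQ
    (lineMap_mem_openSegment _ _ _ ⟨div_pos_of_neg_of_neg hσq (by linarith), ?_⟩)
  rw [div_lt_one_of_neg (by linarith)]
  linarith

end Extension

section Facet

variable {E : Type*} [NormedAddCommGroup E] [NormedSpace ℝ E]

theorem exists_affine_of_isExposed {P F : Set E} (hF : IsExposed ℝ P F) (hne : F.Nonempty) :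
    ∃ σ : E →ᴬ[ℝ] ℝ, (∀ x ∈ P, σ x ≤ 0) ∧ F = {x ∈ P | σ x = 0} := by
  obtain ⟨l, rfl⟩ := hF hne
  obtain ⟨o, hoP, ho⟩ := hne
  have hσ (x : E) : (l.toContinuousAffineMap - .const ℝ E (l o) : E →ᴬ[ℝ] ℝ) x = l x - l o := rfl
  refine ⟨_, fun x hx => (hσ x).trans_le (sub_nonpos.2 (ho x hx)), ?_⟩
  ext x
  simp only [Set.mem_ofPred_eq, hσ, sub_eq_zero]
  exact and_congr_right fun hx => ⟨fun h => (ho x hx).antisymm (h o hoP),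
    fun h y hy => (ho y hy).trans_eq h.symm⟩

theorem affine_neg_of_mem_interior {σ : E →ᴬ[ℝ] ℝ} (hσ : σ.contLinear ≠ 0) {P : Set E}
    (hP : ∀ x ∈ P, σ x ≤ 0) {q : E} (hq : q ∈ interior P) : σ q < 0 := by
  have hopen : IsOpenMap σ := AffineMap.isOpenMap_linear_iff (f := σ.toAffineMap).1
    (σ.contLinear.isOpenMap_of_ne_zero hσ)
  have hP' : P ⊆ σ ⁻¹' Set.Iic 0 := hP
  have hsub : interior (σ '' P) ⊆ Set.Iio 0 :=
    (interior_mono (Set.image_subset_iff.2 hP')).trans interior_Iic.subset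
  exact hsub (hopen.image_interior_subset P (Set.mem_image_of_mem σ hq))

theorem sdim_eq_finrank_of_nonempty_interior {P : Set E} (hP : (interior P).Nonempty) :
    sdim P = Module.finrank ℝ E := by
  rw [sdim, affineSpan_eq_top_of_nonempty_interior
    (hP.mono (interior_mono (subset_convexHull ℝ P))), AffineSubspace.direction_top, finrank_top]

theorem IsFacetOf.nonempty {d : ℕ} {P F : Set E} (hF : IsFacetOf d P F) (hd : 2 ≤ d) :
    F.Nonempty := by
  rw [Set.nonempty_iff_ne_empty]
  rintro rfl
  have h := hF.2
  rw [sdim, AffineSubspace.span_empty, AffineSubspace.direction_bot, finrank_bot] at h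
  omega

theorem IsFacetOf.contLinear_ne_zero {P F : Set E} (hF : IsFacetOf (Module.finrank ℝ E) P F)
    (hne : F.Nonempty) (hP : (interior P).Nonempty) {σ : E →ᴬ[ℝ] ℝ}
    (hFσ : F = {x ∈ P | σ x = 0}) (hE : 0 < Module.finrank ℝ E) : σ.contLinear ≠ 0 := by
  intro hσ
  obtain ⟨o, ho⟩ := hne
  have hσo : σ o = 0 := (hFσ.subset ho).2
  have hFP : F = P := hFσ.trans (Set.sep_eq_self_iff_mem_true.2 fun x _ => by
    have h := σ.contLinear_map_vsub x o
    rwa [hσ, hσo, vsub_eq_sub, vsub_eq_sub, sub_zero, eq_comm] at h)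
  have hdim := hF.2
  rw [hFP, sdim_eq_finrank_of_nonempty_interior hP] at hdim
  omega

variable [FiniteDimensional ℝ E]

theorem exists_eventually_nhdsWithin_affineSpan_mem {F : Set E} (hF : Convex ℝ F)
    (hne : F.Nonempty) : ∃ m ∈ F, ∀ᶠ x in 𝓝[(affineSpan ℝ F : Set E)] m, x ∈ F := by
  obtain ⟨_, m, hm, rfl⟩ := hne.intrinsicInterior hF
  refine ⟨m, (interior_subset hm :), ?_⟩
  rw [← map_nhds_subtype_val, Filter.eventually_map]
  exact mem_interior_iff_mem_nhds.1 hm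

theorem coe_affineSpan_eq_levelSet {σ : E →ᴬ[ℝ] ℝ} (hσ : σ.contLinear ≠ 0) {F : Set E}
    (hF : ∀ x ∈ F, σ x = 0) (hne : F.Nonempty) (hdim : sdim F = Module.finrank ℝ E - 1) :
    (affineSpan ℝ F : Set E) = {x | σ x = 0} := by
  obtain ⟨o, ho⟩ := hne
  have hσo (x : E) : σ.contLinear (x - o) = σ x := by
    rw [← vsub_eq_sub, σ.contLinear_map_vsub, hF o ho, vsub_eq_sub, sub_zero]
  have hle : (affineSpan ℝ F).direction ≤ σ.contLinear.ker := by
    rw [direction_affineSpan, vectorSpan_eq_span_vsub_set_right ℝ ho, Submodule.span_le]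
    rintro _ ⟨x, hx, rfl⟩
    exact (hσo x).trans (hF x hx)
  have hrank : sdim F = Module.finrank ℝ σ.contLinear.ker := by
    have h := Module.Dual.finrank_ker_add_one_of_ne_zero (f := σ.contLinear.toLinearMap)
      (by exact_mod_cast hσ)
    rw [hdim, ← h, Nat.add_sub_cancel]
  have hdir := Submodule.eq_of_le_of_finrank_eq hle hrank
  ext x
  rw [SetLike.mem_coe, ← AffineSubspace.vsub_right_mem_direction_iff_mem
    (mem_affineSpan ℝ ho), hdir, vsub_eq_sub]
  exact LinearMap.mem_ker.trans (Eq.congr_left (hσo x))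

theorem IsPolytope.exists_extension_beyond_facet {P F : Set E} (hP : IsPolytope P)
    (hF : F.Nonempty) {σ : E →ᴬ[ℝ] ℝ} (hσ : σ.contLinear ≠ 0) (hσP : ∀ x ∈ P, σ x ≤ 0)
    (hFσ : F = {x ∈ P | σ x = 0}) (hdim : sdim F = Module.finrank ℝ E - 1) {q : E}
    (hq : q ∈ interior P) :
    ∃ Q : Set E, IsCompact Q ∧ Convex ℝ Q ∧ {x ∈ Q | σ x ≤ 0} = P ∧ ∃ p ∈ interior Q, σ p = 0 := by
  obtain ⟨S, rfl⟩ := hP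
  have hFconv : Convex ℝ F := hFσ ▸
    (convex_convexHull ℝ _).inter ((convex_singleton (0 : ℝ)).affine_preimage σ.toAffineMap)
  obtain ⟨m, hmF, hm⟩ := exists_eventually_nhdsWithin_affineSpan_mem hFconv hF
  rw [coe_affineSpan_eq_levelSet hσ (fun x hx => (hFσ.subset hx).2) hF hdim] at hm
  exact exists_extension_of_eventually_mem S.finite_toSet hσP (hFσ.subset hmF).2
    (hm.mono fun x hx => (hFσ.subset hx).1) hq (affine_neg_of_mem_interior hσ hσP hq)

end Facet

section Positivity

variable {E : Type*} [NormedAddCommGroup E] [NormedSpace ℝ E]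

theorem affine_pos_of_mem_interior {g : E →ᴬ[ℝ] ℝ} {Q : Set E} (hg : ∀ x ∈ Q, 0 ≤ g x)
    (hne : ∃ x ∈ Q, g x ≠ 0) {q : E} (hq : q ∈ interior Q) : 0 < g q := by
  obtain ⟨x, hx, hgx⟩ := hne
  by_cases hlin : g.contLinear = 0
  · have hgq : g q = g x := by
      have h := g.contLinear_map_vsub q x
      rwa [hlin, zero_apply, vsub_eq_sub, eq_comm, sub_eq_zero] at h
    exact hgq ▸ (hg x hx).lt_of_ne' hgx
  · refine neg_lt_zero.1 (affine_neg_of_mem_interior (σ := -g) ?_ (P := Q) ?_ hq)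
    · rwa [ContinuousAffineMap.neg_contLinear, neg_ne_zero]
    · exact fun x hx => neg_nonpos.2 (hg x hx)

variable [MeasurableSpace E] [BorelSpace E]

theorem setIntegral_affine_pos (μ : Measure E) [μ.IsAddHaarMeasure] {Q : Set E} (hQ : IsCompact Q)
    (hint : (interior Q).Nonempty) {g : E →ᴬ[ℝ] ℝ} (hg : ∀ x ∈ Q, 0 ≤ g x)
    (hne : ∃ x ∈ Q, g x ≠ 0) : 0 < ∫ x in Q, g x ∂μ := by
  rw [setIntegral_pos_iff_support_of_nonneg_ae
    (ae_restrict_of_forall_mem hQ.measurableSet hg)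
    (g.continuous.continuousOn.integrableOn_compact hQ)]
  refine (isOpen_interior.measure_pos μ hint).trans_le (measure_mono fun x hx => ?_)
  exact ⟨(affine_pos_of_mem_interior hg hne hx).ne', interior_subset hx⟩

theorem setIntegral_affine_hausdorffMeasure_sdim_pos [FiniteDimensional ℝ E] {F : Set E}
    (hF : IsCompact F) (hconv : Convex ℝ F) {g : E →ᴬ[ℝ] ℝ} (hg : ∀ x ∈ F, 0 ≤ g x)
    (hne : ∃ x ∈ F, g x ≠ 0) :
    0 < ∫ x in F, g x ∂μH[sdim F] := by
  obtain ⟨x, hx, hgx⟩ := hne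
  obtain ⟨m, hm, hmF⟩ := exists_eventually_nhdsWithin_affineSpan_mem hconv ⟨x, hx⟩
  let V : Submodule ℝ E := (affineSpan ℝ F).direction
  let ι : V →ᴬ[ℝ] E := .const ℝ V m + V.subtypeL.toContinuousAffineMap
  have hsub : ∀ x ∈ F, x - m ∈ V := fun x hx =>
    AffineSubspace.vsub_mem_direction (mem_affineSpan ℝ hx) (mem_affineSpan ℝ hm)
  have hι : Isometry ι := (isometry_add_left m).comp (f := V.subtype) isometry_subtype_coe
  have hint : (0 : V) ∈ interior (ι ⁻¹' F) := by
    refine mem_interior_iff_mem_nhds.2 ((tendsto_nhdsWithin_iff.2 ⟨?_, ?_⟩).eventually hmF)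
    · exact ι.continuous.tendsto' 0 m (add_zero m)
    · refine .of_forall fun y => ?_
      rw [show ι y = (y : E) +ᵥ m from add_comm m y]
      exact AffineSubspace.vadd_mem_of_mem_direction y.2 (mem_affineSpan ℝ hm)
  rw [setIntegral_hausdorffMeasure_eq_submodule V hsub (Nat.cast_nonneg _)]
  exact setIntegral_affine_pos (μH[Module.finrank ℝ V])
    (hι.isClosedEmbedding.isCompact_preimage hF) ⟨0, hint⟩ (g := g.comp ι) (fun y hy => hg _ hy)
    ⟨⟨x - m, hsub x hx⟩, by simpa [ι] using hx, by simpa [ι] using hgx⟩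

theorem IsFacetOf.setIntegral_affine_pos {d : ℕ} {P F : Set (Euc d)} (hF : IsFacetOf d P F)
    (hbody : IsConvexBody P) (hd : 0 < d) {g : Euc d →ᴬ[ℝ] ℝ} (hg : ∀ x ∈ F, 0 ≤ g x)
    (hne : ∃ x ∈ F, g x ≠ 0) : 0 < ∫ x in F, g x ∂μH[(d - 1 : ℝ)] := by
  have h := setIntegral_affine_hausdorffMeasure_sdim_pos (hF.1.isCompact hbody.1)
    (hF.1.convex hbody.2.1) hg hne
  rwa [hF.2, Nat.cast_pred hd] at h

end Positivity

section FirstVariation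

theorem hasDerivAt_det_of_eq_one {n : Type*} [Fintype n] [DecidableEq n]
    {A : ℝ → Matrix n n ℝ} {A' : Matrix n n ℝ} {x : ℝ}
    (hA : ∀ i j, HasDerivAt (fun t => A t i j) (A' i j) x) (hx : A x = 1) :
    HasDerivAt (fun t => (A t).det) A'.trace x := by
  simp only [Matrix.det_apply']
  refine (HasDerivAt.fun_sum fun (π : Equiv.Perm n) _ => (HasDerivAt.fun_finsetProd
    fun i _ => hA (π i) i).const_mul ((Equiv.Perm.sign π : ℤ) : ℝ)).congr_deriv ?_
  rw [Finset.sum_eq_single 1]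
  · simp [hx, Matrix.trace]
  · intro π _ hπ
    refine mul_eq_zero_of_right _ (Finset.sum_eq_zero fun i _ => ?_)
    -- a permutation other than the identity moves some index besides `i`
    obtain ⟨k, hk, hki⟩ := exists_mem_ne (Equiv.Perm.one_lt_card_support_of_ne_one hπ) i
    rw [Finset.prod_eq_zero (mem_erase.2 ⟨hki, mem_univ k⟩), zero_smul]
    rw [hx, Matrix.one_apply_ne (Equiv.Perm.mem_support.1 hk)]
  · simp

variable {d : ℕ}

theorem centroid_apply {K : Set (Euc d)} (hK : IsCompact K) (i : Fin d) :
    centroid K i = (volume K).toReal⁻¹ * ∫ x in K, x i := by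
  have h : (∫ x in K, x) i = ∫ x in K, x i :=
    ((EuclideanSpace.proj (𝕜 := ℝ) i).integral_comp_comm
      (continuous_id.continuousOn.integrableOn_compact hK)).symm
  simp [_root_.centroid, h]

theorem covMatrix_apply {K : Set (Euc d)} (hK : IsCompact K) (i j : Fin d) :
    covMatrix K i j = (volume K).toReal⁻¹ * (∫ x in K, x i * x j) -
      centroid K i * centroid K j := by
  have hexp : ∫ x in K, (x i - centroid K i) * (x j - centroid K j) =
      (∫ x in K, x i * x j) - (∫ x in K, x i) * centroid K j - centroid K i * (∫ x in K, x j)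
        + (volume K).toReal * (centroid K i * centroid K j) := by
    simp only [sub_mul, mul_sub]
    rw [integral_sub, integral_sub, integral_sub, integral_mul_const, integral_const_mul,
      setIntegral_const, smul_eq_mul, Measure.real]
    · ring
    all_goals exact ContinuousOn.integrableOn_compact hK (by fun_prop)
  rw [covMatrix, Matrix.of_apply, hexp]
  by_cases hV : (volume K).toReal = 0
  · simp [centroid_apply hK, hV]
  · simp only [centroid_apply hK]
    field_simp
    ring

theorem IsConvexBody.volume_toReal_pos {K : Set (Euc d)} (hK : IsConvexBody K) :
    0 < (volume K).toReal :=
  ENNReal.toReal_pos (Measure.measure_pos_of_nonempty_interior volume hK.2.2).ne'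
    hK.1.measure_lt_top.ne

/-- The family of compact sets `K t` has first variation `D` at `t = 0`: the integral of every
continuous function `f` over `K t` is differentiable at `t = 0`, with derivative `D f`. -/
def HasFirstVariation (K : ℝ → Set (Euc d)) (D : (Euc d → ℝ) → ℝ) : Prop :=
  (∀ t, IsCompact (K t)) ∧
    ∀ f : Euc d → ℝ, Continuous f → HasDerivAt (fun t => ∫ x in K t, f x) (D f) 0

namespace HasFirstVariation

variable {K : ℝ → Set (Euc d)} {D : (Euc d → ℝ) → ℝ}

theorem hasDerivAt_volume (h : HasFirstVariation K D) :
    HasDerivAt (fun t => (volume (K t)).toReal) (D fun _ => 1) 0 := by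
  simpa [Measure.real] using h.2 (fun _ => 1) continuous_const

theorem norm_sq_eq_sum (h : HasFirstVariation K D) :
    D (fun x => ‖x‖ ^ 2) = ∑ i, D fun x => x i * x i := by
  have hsum := HasDerivAt.fun_sum (u := Finset.univ) fun (i : Fin d) _ =>
    h.2 (fun x => x i * x i) (by fun_prop)
  refine (h.2 (fun x => ‖x‖ ^ 2) (by fun_prop)).unique (hsum.congr_of_eventuallyEq
    (.of_forall fun t => ?_))
  simp only [EuclideanSpace.real_norm_sq_eq, ← pow_two]
  exact integral_finsetSum _ fun i _ =>
    ContinuousOn.integrableOn_compact (h.1 t) (by fun_prop)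

theorem hasDerivAt_covMatrix (h : HasFirstVariation K D) (hiso : IsIsotropic (K 0))
    (hvol : (volume (K 0)).toReal ≠ 0) (i j : Fin d) :
    HasDerivAt (fun t => covMatrix (K t) i j) ((volume (K 0)).toReal⁻¹ *
      ((D fun x => x i * x j) - (D fun _ => 1) * (1 : Matrix (Fin d) (Fin d) ℝ) i j)) 0 := by
  have hinv := h.hasDerivAt_volume.fun_inv hvol
  have hcentroid (i : Fin d) : ∃ c', HasDerivAt (fun t => centroid (K t) i) c' 0 := by
    simp only [centroid_apply (h.1 _)]
    exact ⟨_, hinv.fun_mul (h.2 (fun x => x i) (by fun_prop))⟩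
  have hcentroid₀ (i : Fin d) : centroid (K 0) i = 0 := by rw [hiso.1]; rfl
  have hcov₀ : (volume (K 0)).toReal⁻¹ * ∫ x in K 0, x i * x j =
      (1 : Matrix (Fin d) (Fin d) ℝ) i j := by
    rw [← hiso.2, covMatrix_apply (h.1 0), hcentroid₀, zero_mul, sub_zero]
  obtain ⟨ci, hci⟩ := hcentroid i
  obtain ⟨cj, hcj⟩ := hcentroid j
  simp only [covMatrix_apply (h.1 _)]
  refine ((hinv.fun_mul (h.2 (fun x => x i * x j) (by fun_prop))).fun_sub
    (hci.fun_mul hcj)).congr_deriv ?_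
  rw [hcentroid₀, hcentroid₀, ← hcov₀]
  field_simp
  ring

theorem hasDerivAt_det_covMatrix_div_volume_sq (h : HasFirstVariation K D)
    (hiso : IsIsotropic (K 0)) (hvol : (volume (K 0)).toReal ≠ 0) :
    HasDerivAt (fun t => (covMatrix (K t)).det / (volume (K t)).toReal ^ 2)
      ((D (fun x => ‖x‖ ^ 2) - (d + 2) * D (fun _ => 1)) / (volume (K 0)).toReal ^ 3) 0 := by
  have hdet := hasDerivAt_det_of_eq_one (A' := (volume (K 0)).toReal⁻¹ •
    ((Matrix.of fun i j => D fun x => x i * x j) - (D fun _ => 1) • (1 : Matrix (Fin d) (Fin d) ℝ)))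
    (h.hasDerivAt_covMatrix hiso hvol) hiso.2
  refine (hdet.fun_div (h.hasDerivAt_volume.fun_pow 2) (pow_ne_zero 2 hvol)).congr_deriv ?_
  have htrace : (Matrix.of fun i j => D fun x => x i * x j).trace = D (fun x => ‖x‖ ^ 2) :=
    h.norm_sq_eq_sum.symm
  rw [hiso.2, Matrix.det_one, Matrix.trace_smul, Matrix.trace_sub, Matrix.trace_smul,
    Matrix.trace_one, Fintype.card_fin, htrace, smul_eq_mul, smul_eq_mul]
  field_simp
  ring

end HasFirstVariation

theorem IsLocalExtremumOfIsoConst.isLocalExtr (hd : 0 < d) {K : ℝ → Set (Euc d)}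
    (hext : IsLocalExtremumOfIsoConst (K 0)) (hbody : ∀ᶠ t in 𝓝 0, IsConvexBody (K t))
    (hdist : Filter.Tendsto (fun t => Metric.hausdorffDist (K t) (K 0)) (𝓝 0) (𝓝 0))
    (hpos : ∀ᶠ t in 𝓝 0, 0 < (covMatrix (K t)).det / (volume (K t)).toReal ^ 2) :
    IsLocalExtr (fun t => (covMatrix (K t)).det / (volume (K t)).toReal ^ 2) 0 := by
  have hexp : (0 : ℝ) < (2 * (d : ℝ))⁻¹ := by positivity
  have hpos₀ := hpos.self_of_nhds
  obtain ⟨ε, hε, hmax⟩ | ⟨ε, hε, hmin⟩ := hext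
  · refine .inr ?_
    filter_upwards [hpos, hbody, hdist.eventually (gt_mem_nhds hε)] with t hpt hbt hdt
    exact (Real.rpow_le_rpow_iff hpt.le hpos₀.le hexp).1 (hmax (K t) hbt hdt)
  · refine .inl ?_
    filter_upwards [hpos, hbody, hdist.eventually (gt_mem_nhds hε)] with t hpt hbt hdt
    exact (Real.rpow_le_rpow_iff hpos₀.le hpt.le hexp).1 (hmin (K t) hbt hdt)

theorem IsLocalExtremumOfIsoConst.firstVariation_norm_sq (hd : 0 < d) {K : ℝ → Set (Euc d)}
    (hext : IsLocalExtremumOfIsoConst (K 0)) (hiso : IsIsotropic (K 0))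
    (hbody : ∀ᶠ t in 𝓝 0, IsConvexBody (K t))
    (hdist : Filter.Tendsto (fun t => Metric.hausdorffDist (K t) (K 0)) (𝓝 0) (𝓝 0))
    {D : (Euc d → ℝ) → ℝ} (hD : HasFirstVariation K D) :
    D (fun x => ‖x‖ ^ 2) = (d + 2) * D (fun _ => 1) := by
  have hvol := hbody.self_of_nhds.volume_toReal_pos
  have hderiv := hD.hasDerivAt_det_covMatrix_div_volume_sq hiso hvol.ne'
  have hpos₀ : 0 < (covMatrix (K 0)).det / (volume (K 0)).toReal ^ 2 := by
    rw [hiso.2, Matrix.det_one]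
    positivity
  have hcrit := (hext.isLocalExtr hd hbody hdist
    (hderiv.continuousAt.eventually (lt_mem_nhds hpos₀))).hasDerivAt_eq_zero hderiv
  rwa [div_eq_zero_iff, or_iff_left (by positivity), sub_eq_zero] at hcrit

end FirstVariation

namespace IsLocalExtremumOfIsoConst

variable {d : ℕ} {P : Set (Euc d)}

theorem setIntegral_norm_sq_mul_of_contLinear_eq_zero (hext : IsLocalExtremumOfIsoConst P)
    (hiso : IsIsotropic P) (hd : 0 < d) {Q : Set (Euc d)} (hQ : IsCompact Q) (hconv : Convex ℝ Q)
    {σ : Euc d →ᴬ[ℝ] ℝ} (hQP : {x ∈ Q | σ x ≤ 0} = P) {p q : Euc d} (hp : p ∈ interior Q)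
    (hσp : σ p = 0) (hq : q ∈ interior Q) (hσq : σ q < 0) {w : Euc d} (hw : σ.contLinear w = 1)
    {g : Euc d →ᴬ[ℝ] ℝ} (hg : g.contLinear w = 0) :
    ∫ x in {x ∈ P | σ x = 0}, ‖x‖ ^ 2 * g x ∂μH[(d - 1 : ℝ)] =
      (d + 2) * ∫ x in {x ∈ P | σ x = 0}, g x ∂μH[(d - 1 : ℝ)] := by
  have hface : {x ∈ P | σ x = 0} = {x ∈ Q | σ x = 0} := by
    ext x
    rw [← hQP]
    exact ⟨fun h => ⟨h.1.1, h.2⟩, fun h => ⟨⟨h.1, h.2.le⟩, h.2⟩⟩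
  have hcut₀ : tiltedCut σ g Q 0 = P := (tiltedCut_zero σ g Q).trans hQP
  obtain ⟨c, hc, hderiv⟩ := exists_hasDerivAt_setIntegral_tiltedCut hw hg volume hQ hconv hp hσp
  have hbody : ∀ᶠ t in 𝓝 0, IsConvexBody (tiltedCut σ g Q t) :=
    (eventually_nonempty_interior_tiltedCut g hq hσq).mono fun t ht =>
      ⟨isCompact_tiltedCut σ g hQ t, convex_tiltedCut σ g hconv t, ht⟩
  have hcrit := firstVariation_norm_sq (K := tiltedCut σ g Q) hd (hcut₀ ▸ hext) (hcut₀ ▸ hiso)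
    hbody (tendsto_hausdorffDist_tiltedCut g hQ hconv (interior_subset hq) hσq)
    ⟨isCompact_tiltedCut σ g hQ, hderiv⟩
  simp only [finrank_euclideanSpace_fin, one_mul, mul_left_comm _ c] at hcrit
  rw [hface]
  exact mul_left_cancel₀ hc.ne' hcrit

theorem setIntegral_norm_sq_mul_of_isFacetOf (hext : IsLocalExtremumOfIsoConst P)
    (hbody : IsConvexBody P) (hP : IsPolytope P) (hiso : IsIsotropic P) {F : Set (Euc d)}
    (hF : IsFacetOf d P F) (hne : F.Nonempty) (hd : 0 < d) (g : Euc d →ᴬ[ℝ] ℝ) :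
    ∫ x in F, ‖x‖ ^ 2 * g x ∂μH[(d - 1 : ℝ)] = (d + 2) * ∫ x in F, g x ∂μH[(d - 1 : ℝ)] := by
  have hdim : Module.finrank ℝ (Euc d) = d := finrank_euclideanSpace_fin
  obtain ⟨q, hq⟩ := hbody.2.2
  obtain ⟨σ, hσP, rfl⟩ := exists_affine_of_isExposed hF.1 hne
  have hσ : σ.contLinear ≠ 0 :=
    IsFacetOf.contLinear_ne_zero (hdim.symm ▸ hF) hne ⟨q, hq⟩ rfl (hdim.symm ▸ hd)
  obtain ⟨w, hw⟩ : ∃ w, σ.contLinear w = 1 :=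
    LinearMap.surjective (f := σ.contLinear.toLinearMap) (by exact_mod_cast hσ) 1
  obtain ⟨Q, hQ, hconv, hQP, p, hp, hσp⟩ :=
    hP.exists_extension_beyond_facet hne hσ hσP rfl (hdim.symm ▸ hF.2) hq
  -- as `σ` vanishes on the facet, `g` may be changed by a multiple of `σ`
  have hg : (g - g.contLinear w • σ).contLinear w = 0 := by
    rw [ContinuousAffineMap.sub_contLinear, ContinuousAffineMap.smul_contLinear,
      sub_apply, smul_apply, hw, smul_eq_mul, mul_one, sub_self]
  have hcongr : Set.EqOn g ⇑(g - g.contLinear w • σ) {x ∈ P | σ x = 0} := fun x hx => by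
    simp [hx.2]
  have hface : MeasurableSet {x ∈ P | σ x = 0} :=
    hbody.1.measurableSet.inter (σ.continuous.measurable (measurableSet_singleton 0))
  rw [setIntegral_congr_fun hface hcongr,
    setIntegral_congr_fun hface fun x hx => congrArg (‖x‖ ^ 2 * ·) (hcongr hx)]
  exact hext.setIntegral_norm_sq_mul_of_contLinear_eq_zero hiso hd hQ hconv hQP hp hσp
    (interior_mono (hQP ▸ Set.sep_subset _ _) hq) (affine_neg_of_mem_interior hσ hσP hq) hw hg

end IsLocalExtremumOfIsoConst

section PolarCoordinates

theorem polarAngle_eq_zero_iff {a b : ℝ} : polarAngle a b = 0 ↔ 0 ≤ a ∧ b = 0 := by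
  rw [← Complex.arg_eq_zero_iff (z := ⟨a, b⟩), polarAngle]
  split_ifs with h
  · simp [h, Real.pi_ne_zero]
  · rfl

variable {d : ℕ}

/-- The coordinate in the direction `u` of a point, relative to the origin `o`. -/
def innerCoord (o u : Euc d) : Euc d →ᴬ[ℝ] ℝ :=
  (innerSL ℝ u).toContinuousAffineMap - .const ℝ (Euc d) ⟪u, o⟫

theorem innerCoord_apply (o u x : Euc d) : innerCoord o u x = ⟪x - o, u⟫ := by
  rw [real_inner_comm, inner_sub_right]
  rfl

theorem innerCoord_contLinear (o u : Euc d) : (innerCoord o u).contLinear = innerSL ℝ u := by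
  simp [innerCoord]

theorem innerCoord_contLinear_ne_zero (o : Euc d) {u : Euc d} (hu : ‖u‖ = 1) :
    (innerCoord o u).contLinear ≠ 0 := by
  rw [innerCoord_contLinear]
  intro h
  have h' := congrArg norm h
  rw [innerSL_apply_norm, hu, norm_zero] at h'
  exact one_ne_zero h'

theorem exists_inner_ne_zero_of_sdim_eq {F : Set (Euc d)} {o u w : Euc d} (hu : ‖u‖ = 1)
    (hw : ‖w‖ = 1) (huw : ⟪u, w⟫ = 0) (hdim : sdim F = d - 1) (hne : F.Nonempty)
    (hFw : ∀ x ∈ F, ⟪x - o, w⟫ = 0) : ∃ x ∈ F, ⟪x - o, u⟫ ≠ 0 := by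
  have hspan {e : Euc d} (he : ‖e‖ = 1) (hFe : ∀ x ∈ F, ⟪x - o, e⟫ = 0) :
      (affineSpan ℝ F : Set (Euc d)) = {x | innerCoord o e x = 0} :=
    coe_affineSpan_eq_levelSet (innerCoord_contLinear_ne_zero o he)
      (fun x hx => (innerCoord_apply o e x).trans (hFe x hx)) hne
      (by rwa [finrank_euclideanSpace_fin])
  by_contra! hFu
  -- otherwise `F` spans the hyperplanes through `o` orthogonal to `u` and to `w`
  have hmem : o + u ∈ {x | innerCoord o u x = 0} := by
    rw [← hspan hu hFu, hspan hw hFw, Set.mem_ofPred_eq, innerCoord_apply, add_sub_cancel_left,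
      huw]
  rw [Set.mem_ofPred_eq, innerCoord_apply, add_sub_cancel_left, real_inner_self_eq_norm_sq, hu]
    at hmem
  norm_num at hmem

theorem two_le_of_orthonormal {u w : Euc d} (hu : ‖u‖ = 1) (hw : ‖w‖ = 1) (huw : ⟪u, w⟫ = 0) :
    2 ≤ d := by
  have horth : Orthonormal ℝ ![u, w] := by
    simp [hu, hw, huw]
  simpa using horth.linearIndependent.fintype_card_le_finrank

end PolarCoordinates

theorem stmt13_general {d : ℕ} {P : Set (Euc d)} (hbody : IsConvexBody P) (hP : IsPolytope P)
    (hiso : IsIsotropic P) (hext : IsLocalExtremumOfIsoConst P)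
    {F : Set (Euc d)} (hF : IsFacetOf d P F) {o u w : Euc d}
    (hun : ‖u‖ = 1) (hwn : ‖w‖ = 1) (huw : ⟪u, w⟫ = 0)
    {θ ρ : Euc d → ℝ}
    (hθ : θ = fun x => polarAngle ⟪x - o, u⟫ ⟪x - o, w⟫)
    (hρ : ρ = fun x => Real.sqrt (⟪x - o, u⟫ ^ 2 + ⟪x - o, w⟫ ^ 2))
    (horient : ∀ x ∈ F, θ x = 0) :
    (∫ x in F, ‖x‖ ^ 2 * ρ x ∂(μH[(d - 1 : ℝ)])) /
        (∫ x in F, ρ x ∂(μH[(d - 1 : ℝ)]))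
      = d + 2 := by
  have hd : 2 ≤ d := two_le_of_orthonormal hun hwn huw
  have hne : F.Nonempty := hF.nonempty hd
  have hcoord : ∀ x ∈ F, 0 ≤ ⟪x - o, u⟫ ∧ ⟪x - o, w⟫ = 0 := fun x hx =>
    polarAngle_eq_zero_iff.1 ((congrFun hθ x).symm.trans (horient x hx))
  have hρF : Set.EqOn ρ (innerCoord o u) F := fun x hx => by
    obtain ⟨hu, hw⟩ := hcoord x hx
    simp only [hρ, innerCoord_apply, hw, zero_pow two_ne_zero, add_zero, Real.sqrt_sq hu]
  have hFmeas : MeasurableSet F := (hF.1.isCompact hbody.1).measurableSet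
  have hpos : 0 < ∫ x in F, innerCoord o u x ∂μH[(d - 1 : ℝ)] := by
    refine hF.setIntegral_affine_pos hbody (by omega) ?_ ?_ <;> simp only [innerCoord_apply]
    · exact fun x hx => (hcoord x hx).1
    · exact exists_inner_ne_zero_of_sdim_eq hun hwn huw hF.2 hne fun x hx => (hcoord x hx).2
  rw [setIntegral_congr_fun hFmeas hρF,
    setIntegral_congr_fun hFmeas fun x hx => congrArg (‖x‖ ^ 2 * ·) (hρF hx), div_eq_iff hpos.ne']
  exact hext.setIntegral_norm_sq_mul_of_isFacetOf hbody hP hiso hF hne (by omega) (innerCoord o u)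

/-- Let `P` be a `d`-dimensional isotropic simplicial polytope that is a
local extremum of `K ↦ L_K`, `F` a facet of `P` with vertices `v 1, …, v d`, `Z` the affine
hull of the vertices other than `v j'`, and `(ρ, θ, z)` cylindrical coordinates around `Z`
(with origin `o ∈ Z ∩ P`), oriented so that `F` has `θ = 0` and `P` has `θ ∈ (-π, 0]`. If `D`
is the probability distribution on `F` with density proportional to `ρ`, then
`E_{X ∼ D}[‖X‖²] = d + 2`. -/
theorem stmt13 {d : ℕ} (P : Set (Euc d)) (hbody : IsConvexBody P)
    (hsimp : IsSimplicialPolytope d P) (hiso : IsIsotropic P)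
    (hext : IsLocalExtremumOfIsoConst P)
    (F : Set (Euc d)) (hF : IsFacetOf d P F)
    (v : Fin d → Euc d) (hvind : AffineIndependent ℝ v)
    (hFv : F = convexHull ℝ (Set.range v))
    (j' : Fin d)
    (Z : AffineSubspace ℝ (Euc d)) (hZ : Z = affineSpan ℝ (v '' {j | j ≠ j'}))
    (o : Euc d) (ho : o ∈ (Z : Set (Euc d)) ∩ P)
    (u w : Euc d) (hu : u ∈ Z.directionᗮ) (hw : w ∈ Z.directionᗮ)
    (hun : ‖u‖ = 1) (hwn : ‖w‖ = 1) (huw : ⟪u, w⟫ = 0)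
    (θ ρ : Euc d → ℝ)
    (hθ : θ = fun x => polarAngle ⟪x - o, u⟫ ⟪x - o, w⟫)
    (hρ : ρ = fun x => Real.sqrt (⟪x - o, u⟫ ^ 2 + ⟪x - o, w⟫ ^ 2))
    (horient : ∀ x ∈ F, θ x = 0)
    (hPrange : ∀ x ∈ P, θ x ∈ Set.Ioc (-Real.pi) 0) :
    (∫ x in F, ‖x‖ ^ 2 * ρ x ∂(μH[(d - 1 : ℝ)])) /
        (∫ x in F, ρ x ∂(μH[(d - 1 : ℝ)]))
      = d + 2 := by
  exact stmt13_general hbody hsimp.1 hiso hext hF hun hwn huw hθ hρ horient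

end
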